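/- For all d ∈ ℕ and ε ∈ (0,1), the inverse of the BMO-discrepancy satisfies N_BMO(ε,d) ≥ (4/3)^d (1−ε²). Consequently, the BMO-discrepancy suffers from the curse of dimensionality: N_BMO(ε,d) grows at least exponentially in d for fixed ε < 1. -/

import Mathlib

open MeasureTheory Set
open scoped Classical

/-- The one-dimensional dyadic Haar function `h_{j,m}`: `+1` on the left half
of the dyadic interval `I_{j,m} = [m/2^j, (m+1)/2^j)`, `-1` on the right half,
`0` elsewhere. -/
noncomputable def haar1 (j m : ℕ) (x : ℝ) : ℝ :=
  if x ∈ Set.Ico ((m : ℝ) / 2 ^ j) (((m : ℝ) + 1 / 2) / 2 ^ j) then 1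
  else if x ∈ Set.Ico (((m : ℝ) + 1 / 2) / 2 ^ j) (((m : ℝ) + 1) / 2 ^ j) then -1
  else 0

/-- The dyadic interval `I_{j,m} = [m/2^j, (m+1)/2^j)`. -/
def dyadicI (j m : ℕ) : Set ℝ := Set.Ico ((m : ℝ) / 2 ^ j) (((m : ℝ) + 1) / 2 ^ j)

/-- The unit cube `[0,1)^d`. -/
def unitBox (d : ℕ) : Set (Fin d → ℝ) := Set.univ.pi fun _ => Set.Ico (0 : ℝ) 1

/-- The tensor product Haar function `h_{j,m}` on `[0,1)^d`. -/
noncomputable def haarD {d : ℕ} (j m : Fin d → ℕ) (x : Fin d → ℝ) : ℝ :=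
  ∏ i, haar1 (j i) (m i) (x i)

/-- The dyadic box `I_{j,m} ⊆ [0,1)^d`. -/
def dyadicBox {d : ℕ} (j m : Fin d → ℕ) : Set (Fin d → ℝ) :=
  Set.univ.pi fun i => dyadicI (j i) (m i)

/-- The Haar coefficient `⟨f, h_{j,m}⟩ = ∫_{[0,1)^d} f·h_{j,m}`. -/
noncomputable def haarCoef {d : ℕ} (f : (Fin d → ℝ) → ℝ) (j m : Fin d → ℕ) : ℝ :=
  ∫ x in unitBox d, f x * haarD j m x

/-- The anchored local discrepancy `Δ_P([0,t))` of the point set `P`. -/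
noncomputable def discAnch {d N : ℕ} (P : Fin N → Fin d → ℝ) (t : Fin d → ℝ) : ℝ :=
  ((Finset.univ.filter fun i => ∀ k, 0 ≤ P i k ∧ P i k < t k).card : ℝ) / N
    - ∏ k, t k

/-- The local discrepancy `Δ_P([a,b))` of the point set `P` on the box `[a,b)`. -/
noncomputable def discBoxFn {d N : ℕ} (P : Fin N → Fin d → ℝ) (a b : Fin d → ℝ) : ℝ :=
  ((Finset.univ.filter fun i => ∀ k, a k ≤ P i k ∧ P i k < b k).card : ℝ) / N
    - ∏ k, (b k - a k)

/-- Squared extreme (unanchored) `L₂`-discrepancy. -/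
noncomputable def L2extrSq {d N : ℕ} (P : Fin N → Fin d → ℝ) : ℝ :=
  ∫ x in unitBox d, ∫ y in unitBox d,
    (if x ≤ y then (discBoxFn P x y) ^ 2 else 0)

/-- The squared (product dyadic) BMO seminorm of `f`, via Haar coefficients. -/
noncomputable def bmoSq {d : ℕ} (f : (Fin d → ℝ) → ℝ) : ℝ :=
  ⨆ U : {U : Set (Fin d → ℝ) // MeasurableSet U ∧ U ⊆ unitBox d ∧ 0 < volume U},
    (volume U.1).toReal⁻¹ *
      ∑' j : Fin d → ℕ, (2 : ℝ) ^ (∑ i, j i) *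
        ∑ m ∈ Fintype.piFinset (fun i => Finset.range (2 ^ j i)),
          (if dyadicBox j m ⊆ U.1 then (haarCoef f j m) ^ 2 else 0)

/-- The `N`-th minimal BMO-discrepancy in dimension `d`. -/
noncomputable def discBMO (d N : ℕ) : ℝ :=
  ⨅ P : {P : Fin N → Fin d → ℝ // ∀ i, P i ∈ unitBox d},
    Real.sqrt (bmoSq (discAnch P.1))

/-- The `N`-th minimal extreme `L₂`-discrepancy in dimension `d`. -/
noncomputable def discL2extr (d N : ℕ) : ℝ :=
  ⨅ P : {P : Fin N → Fin d → ℝ // ∀ i, P i ∈ unitBox d},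
    Real.sqrt (L2extrSq P.1)

/-- Inverse of the BMO-discrepancy; the initial BMO-discrepancy is `12^{-d/2}`. -/
noncomputable def NinvBMO (d : ℕ) (ε : ℝ) : ℕ :=
  sInf {N : ℕ | discBMO d N ≤ ε * Real.sqrt ((1 / 12) ^ d)}

/-- Inverse of the extreme `L₂`-discrepancy; its initial value is `12^{-d/2}`. -/
noncomputable def NinvL2extr (d : ℕ) (ε : ℝ) : ℕ :=
  sInf {N : ℕ | discL2extr d N ≤ ε * Real.sqrt ((1 / 12) ^ d)}


noncomputable section

/-- absolute value of the one-dimensional Haar coefficient of a point indicator -/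
def tentG (j m : ℕ) (p : ℝ) : ℝ :=
  max 0 (min (p - (m : ℝ) / 2 ^ j) (((m : ℝ) + 1) / 2 ^ j - p))

lemma tentG_nonneg (j m : ℕ) (p : ℝ) : 0 ≤ tentG j m p := le_max_left _ _

lemma haar1_eq (j m : ℕ) (x : ℝ) : haar1 j m x =
    (Set.Ico ((m : ℝ) / 2 ^ j) (((m : ℝ) + 1 / 2) / 2 ^ j)).indicator (fun _ => (1 : ℝ)) x
    - (Set.Ico (((m : ℝ) + 1 / 2) / 2 ^ j) (((m : ℝ) + 1) / 2 ^ j)).indicator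
        (fun _ => (1 : ℝ)) x := by
  unfold haar1
  by_cases h1 : x ∈ Set.Ico ((m : ℝ) / 2 ^ j) (((m : ℝ) + 1 / 2) / 2 ^ j)
  · have h2 : x ∉ Set.Ico (((m : ℝ) + 1 / 2) / 2 ^ j) (((m : ℝ) + 1) / 2 ^ j) := by
      intro h; exact absurd h1.2 (not_lt.mpr h.1)
    rw [if_pos h1, Set.indicator_of_mem h1, Set.indicator_of_notMem h2]; ring
  · by_cases h2 : x ∈ Set.Ico (((m : ℝ) + 1 / 2) / 2 ^ j) (((m : ℝ) + 1) / 2 ^ j)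
    · rw [if_neg h1, if_pos h2, Set.indicator_of_notMem h1, Set.indicator_of_mem h2]; ring
    · rw [if_neg h1, if_neg h2, Set.indicator_of_notMem h1, Set.indicator_of_notMem h2]; ring

lemma haar1_meas (j m : ℕ) : Measurable (haar1 j m) := by
  have : haar1 j m = fun x => _ := funext (haar1_eq j m)
  rw [this]
  exact (measurable_const.indicator measurableSet_Ico).sub
    (measurable_const.indicator measurableSet_Ico)

lemma haar1_abs (j m : ℕ) (x : ℝ) : |haar1 j m x| ≤ 1 := by
  unfold haar1; split_ifs <;> simp

lemma haar_pts (j m : ℕ) (hm : m < 2 ^ j) :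
    (0 : ℝ) ≤ (m : ℝ) / 2 ^ j ∧ (m : ℝ) / 2 ^ j ≤ ((m : ℝ) + 1 / 2) / 2 ^ j ∧
    ((m : ℝ) + 1 / 2) / 2 ^ j ≤ ((m : ℝ) + 1) / 2 ^ j ∧ ((m : ℝ) + 1) / 2 ^ j ≤ 1 := by
  have h2 : (0 : ℝ) < 2 ^ j := by positivity
  refine ⟨by positivity, ?_, ?_, ?_⟩
  · gcongr; linarith
  · gcongr; norm_num
  · rw [div_le_one h2]; exact_mod_cast hm

lemma haar_int (j m : ℕ) (hm : m < 2 ^ j) (φ : ℝ → ℝ)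
    (hφ : IntegrableOn φ (Set.Ico 0 1)) :
    ∫ x in Set.Ico (0 : ℝ) 1, φ x * haar1 j m x =
      (∫ x in Set.Ico ((m : ℝ) / 2 ^ j) (((m : ℝ) + 1 / 2) / 2 ^ j), φ x)
      - ∫ x in Set.Ico (((m : ℝ) + 1 / 2) / 2 ^ j) (((m : ℝ) + 1) / 2 ^ j), φ x := by
  obtain ⟨h0, h1, h2, h3⟩ := haar_pts j m hm
  set a := (m : ℝ) / 2 ^ j
  set b := ((m : ℝ) + 1 / 2) / 2 ^ j
  set c := ((m : ℝ) + 1) / 2 ^ j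
  have e : ∀ x, φ x * haar1 j m x =
      (Set.Ico a b).indicator φ x - (Set.Ico b c).indicator φ x := by
    intro x
    rw [haar1_eq, mul_sub]
    congr 1
    · by_cases h : x ∈ Set.Ico a b <;> simp [a, b] <;> simp_all [a, b]
    · by_cases h : x ∈ Set.Ico b c <;> simp [b, c] <;> simp_all [b, c]
  simp_rw [e]
  rw [integral_sub (hφ.integrable.indicator measurableSet_Ico)
    (hφ.integrable.indicator measurableSet_Ico),
    setIntegral_indicator measurableSet_Ico, setIntegral_indicator measurableSet_Ico,
    Set.inter_eq_right.mpr (Set.Ico_subset_Ico h0 (h2.trans h3)),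
    Set.inter_eq_right.mpr (Set.Ico_subset_Ico (h0.trans h1) h3)]

lemma int_haar_id (j m : ℕ) (hm : m < 2 ^ j) :
    ∫ t in Set.Ico (0 : ℝ) 1, t * haar1 j m t = -(1 / (4 * 4 ^ j)) := by
  obtain ⟨h0, h1, h2, h3⟩ := haar_pts j m hm
  rw [haar_int j m hm (fun t => t)
    ((continuous_id.integrableOn_Icc).mono_set Set.Ico_subset_Icc_self)]
  rw [integral_Ico_eq_integral_Ioc, integral_Ico_eq_integral_Ioc,
    ← intervalIntegral.integral_of_le h1, ← intervalIntegral.integral_of_le h2,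
    integral_id, integral_id]
  have : (4 : ℝ) ^ j = 2 ^ j * 2 ^ j := by rw [← mul_pow]; norm_num
  rw [this]
  field_simp
  ring

lemma int_haar_ind (j m : ℕ) (hm : m < 2 ^ j) (p : ℝ) :
    ∫ t in Set.Ico (0 : ℝ) 1, (if p < t then (1 : ℝ) else 0) * haar1 j m t
      = - tentG j m p := by
  obtain ⟨h0, h1, h2, h3⟩ := haar_pts j m hm
  have hi : IntegrableOn (fun t => if p < t then (1 : ℝ) else 0) (Set.Ico 0 1) := by
    have : (fun t => if p < t then (1 : ℝ) else 0) = (Set.Ioi p).indicator fun _ => (1 : ℝ) := by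
      ext t; simp [Set.indicator]
    rw [this]
    exact (integrable_const _).indicator measurableSet_Ioi
  have key : ∀ a b : ℝ, ∫ t in Set.Ico a b, (if p < t then (1 : ℝ) else 0)
      = max 0 (b - max a p) := by
    intro a b
    have : (fun t => if p < t then (1 : ℝ) else 0) = (Set.Ioi p).indicator fun _ => (1 : ℝ) := by
      ext t; simp [Set.indicator]
    rw [integral_Ico_eq_integral_Ioc, this, setIntegral_indicator measurableSet_Ioi,
      Set.Ioc_inter_Ioi]
    simp [max_comm]
  rw [haar_int j m hm _ hi, key, key, tentG]
  have hb : 2 * (((m : ℝ) + 1 / 2) / 2 ^ j) = (m : ℝ) / 2 ^ j + ((m : ℝ) + 1) / 2 ^ j := by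
    ring
  generalize (m : ℝ) / 2 ^ j = a at *
  generalize ((m : ℝ) + 1 / 2) / 2 ^ j = b at *
  generalize ((m : ℝ) + 1) / 2 ^ j = c at *
  simp only [max_def, min_def]
  split_ifs <;> linarith

lemma haar1_integrable (j m : ℕ) : IntegrableOn (haar1 j m) (Set.Ico 0 1) :=
  Integrable.of_bound (C := 1) (haar1_meas j m).aestronglyMeasurable
    (Filter.Eventually.of_forall fun x => haar1_abs j m x)

lemma int_haar_zero (j m : ℕ) (hm : m < 2 ^ j) :
    ∫ t in Set.Ico (0 : ℝ) 1, haar1 j m t = 0 := by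
  obtain ⟨h0, h1, h2, h3⟩ := haar_pts j m hm
  have := haar_int j m hm (fun _ => 1) (integrable_const _)
  simp only [one_mul] at this
  rw [this, setIntegral_const, setIntegral_const, Real.volume_real_Ico_of_le h1,
    Real.volume_real_Ico_of_le h2]
  simp only [smul_eq_mul]
  ring

lemma int_haar_sq (j m : ℕ) (hm : m < 2 ^ j) :
    ∫ t in Set.Ico (0 : ℝ) 1, haar1 j m t * haar1 j m t = (2 ^ j)⁻¹ := by
  obtain ⟨h0, h1, h2, h3⟩ := haar_pts j m hm
  rw [haar_int j m hm _ (haar1_integrable j m)]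
  have i1 : ∫ x in Set.Ico ((m : ℝ) / 2 ^ j) (((m : ℝ) + 1 / 2) / 2 ^ j), haar1 j m x =
      ∫ x in Set.Ico ((m : ℝ) / 2 ^ j) (((m : ℝ) + 1 / 2) / 2 ^ j), (1 : ℝ) :=
    setIntegral_congr_fun measurableSet_Ico
    (fun x hx => by simp only [haar1]; rw [if_pos hx])
  have i2 : ∫ x in Set.Ico (((m : ℝ) + 1 / 2) / 2 ^ j) (((m : ℝ) + 1) / 2 ^ j), haar1 j m x =
      ∫ x in Set.Ico (((m : ℝ) + 1 / 2) / 2 ^ j) (((m : ℝ) + 1) / 2 ^ j), (-1 : ℝ) :=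
    setIntegral_congr_fun measurableSet_Ico
    (fun x hx => by
      simp only [haar1]; rw [if_neg (fun h => absurd h.2 (not_lt.mpr hx.1)), if_pos hx])
  rw [i1, i2, setIntegral_const, setIntegral_const, Real.volume_real_Ico_of_le h1,
    Real.volume_real_Ico_of_le h2]
  simp only [smul_eq_mul]
  ring

/-- Haar function through the floor. -/
lemma haar1_floor (j m : ℕ) (x : ℝ) (hx : 0 ≤ x) : haar1 j m x =
    if ⌊2 ^ (j + 1) * x⌋₊ = 2 * m then 1 else if ⌊2 ^ (j + 1) * x⌋₊ = 2 * m + 1 then -1 else 0 := by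
  have h2 : (0 : ℝ) < 2 ^ j := by positivity
  have hn : 0 ≤ 2 ^ (j + 1) * x := by positivity
  unfold haar1
  have e1 : x ∈ Set.Ico ((m : ℝ) / 2 ^ j) (((m : ℝ) + 1 / 2) / 2 ^ j) ↔
      ⌊2 ^ (j + 1) * x⌋₊ = 2 * m := by
    rw [Nat.floor_eq_iff hn, Set.mem_Ico, div_le_iff₀ h2, lt_div_iff₀ h2, pow_succ]
    push_cast
    constructor <;> rintro ⟨h, h'⟩ <;> constructor <;> linarith
  have e2 : x ∈ Set.Ico (((m : ℝ) + 1 / 2) / 2 ^ j) (((m : ℝ) + 1) / 2 ^ j) ↔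
      ⌊2 ^ (j + 1) * x⌋₊ = 2 * m + 1 := by
    rw [Nat.floor_eq_iff hn, Set.mem_Ico, div_le_iff₀ h2, lt_div_iff₀ h2, pow_succ]
    push_cast
    constructor <;> rintro ⟨h, h'⟩ <;> constructor <;> linarith
  simp only [e1, e2]

lemma haar1_supp (j m : ℕ) (x : ℝ) (h : x ∉ dyadicI j m) : haar1 j m x = 0 := by
  have h2 : (0 : ℝ) < 2 ^ j := by positivity
  unfold haar1
  rw [if_neg, if_neg]
  · intro h'; apply h
    refine ⟨le_trans ?_ h'.1, h'.2⟩
    gcongr; linarith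
  · intro h'; apply h
    refine ⟨h'.1, lt_of_lt_of_le h'.2 ?_⟩
    gcongr; norm_num

lemma mem_dyadicI (j m : ℕ) (x : ℝ) (hx : 0 ≤ x) : x ∈ dyadicI j m ↔ ⌊2 ^ j * x⌋₊ = m := by
  have h2 : (0 : ℝ) < 2 ^ j := by positivity
  rw [Nat.floor_eq_iff (by positivity), dyadicI, Set.mem_Ico, div_le_iff₀ h2, lt_div_iff₀ h2,
    mul_comm x]

lemma int_haar_lt (j m j' m' : ℕ) (hm' : m' < 2 ^ j') (hj : j < j') :
    ∫ t in Set.Ico (0 : ℝ) 1, haar1 j m t * haar1 j' m' t = 0 := by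
  obtain ⟨r, rfl⟩ := Nat.exists_eq_add_of_lt hj
  set c : ℝ := if m' / 2 ^ r = 2 * m then 1 else if m' / 2 ^ r = 2 * m + 1 then -1 else 0
  rw [setIntegral_congr_fun (g := fun t => c * haar1 (j + r + 1) m' t) measurableSet_Ico]
  · rw [integral_const_mul, int_haar_zero _ _ hm', mul_zero]
  · intro t ht
    simp only
    by_cases h : t ∈ dyadicI (j + r + 1) m'
    · congr 1
      rw [mem_dyadicI _ _ _ ht.1] at h
      have : ⌊2 ^ (j + 1) * t⌋₊ = m' / 2 ^ r := by
        rw [← h, ← Nat.floor_div_natCast]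
        congr 1
        push_cast
        rw [show j + r + 1 = (j + 1) + r by ring, pow_add]
        rw [eq_div_iff (by positivity)]
        ring
      rw [haar1_floor _ _ _ ht.1, this]
    · rw [haar1_supp _ _ _ h]; simp

lemma int_haar_orth (j m j' m' : ℕ) (hm : m < 2 ^ j) (hm' : m' < 2 ^ j')
    (h : ¬ (j = j' ∧ m = m')) :
    ∫ t in Set.Ico (0 : ℝ) 1, haar1 j m t * haar1 j' m' t = 0 := by
  rcases lt_trichotomy j j' with hj | hj | hj
  · exact int_haar_lt _ _ _ _ hm' hj
  · subst hj
    rw [setIntegral_congr_fun (g := fun t => (0 : ℝ)) measurableSet_Ico]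
    · simp
    · intro t ht
      simp only
      by_cases h1 : t ∈ dyadicI j m
      · by_cases h2 : t ∈ dyadicI j m'
        · rw [mem_dyadicI _ _ _ ht.1] at h1 h2
          exact absurd ⟨rfl, h1.symm.trans h2⟩ h
        · rw [haar1_supp _ _ _ h2, mul_zero]
      · rw [haar1_supp _ _ _ h1, zero_mul]
  · simp_rw [mul_comm (haar1 j m _)]
    exact int_haar_lt _ _ _ _ hm hj

/-! ### one-dimensional sums -/

lemma sum_tentG (j : ℕ) (p : ℝ) (hp : p ∈ Set.Ico (0 : ℝ) 1) (G : ℝ → ℝ) (hG : G 0 = 0) :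
    ∑ m ∈ Finset.range (2 ^ j), G (tentG j m p) =
      G (min (Int.fract (2 ^ j * p)) (1 - Int.fract (2 ^ j * p)) / 2 ^ j) := by
  have h2 : (0 : ℝ) < 2 ^ j := by positivity
  have hn : 0 ≤ 2 ^ j * p := mul_nonneg h2.le hp.1
  have hfr : Int.fract (2 ^ j * p) = 2 ^ j * p - (⌊2 ^ j * p⌋₊ : ℝ) := by
    rw [Int.fract, natCast_floor_eq_intCast_floor hn]
  have f0 := Int.fract_nonneg (2 ^ j * p)
  have f1 := Int.fract_lt_one (2 ^ j * p)
  rw [Finset.sum_eq_single ⌊2 ^ j * p⌋₊]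
  · congr 1
    unfold tentG
    have e1 : p - (⌊2 ^ j * p⌋₊ : ℝ) / 2 ^ j = Int.fract (2 ^ j * p) / 2 ^ j := by
      rw [hfr]; field_simp
    have e2 : ((⌊2 ^ j * p⌋₊ : ℝ) + 1) / 2 ^ j - p = (1 - Int.fract (2 ^ j * p)) / 2 ^ j := by
      rw [hfr]; field_simp; ring
    rw [e1, e2, min_div_div_right h2.le, max_eq_right]
    apply div_nonneg _ h2.le
    apply le_min <;> linarith
  · intro m _ hne
    have : p ∉ dyadicI j m := by
      rw [mem_dyadicI _ _ _ hp.1]; exact fun h => hne h.symm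
    have : tentG j m p = 0 := by
      unfold tentG
      apply max_eq_left
      by_contra hc
      push Not at hc
      rw [lt_min_iff] at hc
      exact this ⟨by linarith [hc.1], by linarith [hc.2]⟩
    rw [this, hG]
  · intro h
    exfalso; apply h
    rw [Finset.mem_range, Nat.floor_lt hn]
    push_cast
    nlinarith [hp.2]

lemma fract_succ (j : ℕ) (p : ℝ) :
    (Int.fract (2 ^ j * p) < 1 / 2 ∧
      Int.fract (2 ^ (j + 1) * p) = 2 * Int.fract (2 ^ j * p)) ∨
    (1 / 2 ≤ Int.fract (2 ^ j * p) ∧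
      Int.fract (2 ^ (j + 1) * p) = 2 * Int.fract (2 ^ j * p) - 1) := by
  have f0 := Int.fract_nonneg (2 ^ j * p)
  have f1 := Int.fract_lt_one (2 ^ j * p)
  have e : (2 : ℝ) ^ j * p = ⌊(2 : ℝ) ^ j * p⌋ + Int.fract (2 ^ j * p) :=
    (Int.floor_add_fract _).symm
  rcases lt_or_ge (Int.fract (2 ^ j * p)) (1 / 2) with h | h
  · left
    refine ⟨h, ?_⟩
    rw [Int.fract_eq_iff]
    refine ⟨by linarith, by linarith, 2 * ⌊(2 : ℝ) ^ j * p⌋, ?_⟩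
    push_cast
    rw [pow_succ]; linarith
  · right
    refine ⟨h, ?_⟩
    rw [Int.fract_eq_iff]
    refine ⟨by linarith, by linarith, 2 * ⌊(2 : ℝ) ^ j * p⌋ + 1, ?_⟩
    push_cast
    rw [pow_succ]; linarith

def qf (J : ℕ) (p : ℝ) : ℝ := Int.fract (2 ^ J * p) * (1 - Int.fract (2 ^ J * p))

lemma qf_zero (p : ℝ) (hp : p ∈ Set.Ico (0 : ℝ) 1) : qf 0 p = p * (1 - p) := by
  have : Int.fract p = p := Int.fract_eq_self.mpr hp
  simp [qf, this]

lemma qf_bd (J : ℕ) (p : ℝ) : 0 ≤ qf J p ∧ qf J p ≤ 1 := by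
  have f0 := Int.fract_nonneg (2 ^ J * p)
  have f1 := Int.fract_lt_one (2 ^ J * p)
  unfold qf
  constructor <;> nlinarith

lemma sum_aa (J : ℕ) : ∑ j ∈ Finset.range J, ∑ _m ∈ Finset.range (2 ^ j),
    (2 : ℝ) ^ j * (1 / (4 * 4 ^ j)) ^ 2 = (1 - (1 / 4) ^ J) / 12 := by
  induction J with
  | zero => simp
  | succ J ih =>
    rw [Finset.sum_range_succ, ih]
    simp only [Finset.sum_const, Finset.card_range, nsmul_eq_mul]
    push_cast
    have : (4 : ℝ) ^ J = 2 ^ J * 2 ^ J := by rw [← mul_pow]; norm_num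
    rw [div_pow 1 4, div_pow 1 4, one_pow, one_pow, pow_succ 4, this]
    field_simp
    ring

lemma sum_ca (p : ℝ) (hp : p ∈ Set.Ico (0 : ℝ) 1) (J : ℕ) :
    ∑ j ∈ Finset.range J, ∑ m ∈ Finset.range (2 ^ j),
    (2 : ℝ) ^ j * (tentG j m p * (1 / (4 * 4 ^ j))) = (p * (1 - p) - (1 / 4) ^ J * qf J p) / 2 := by
  induction J with
  | zero => simp [qf_zero p hp]
  | succ J ih =>
    rw [Finset.sum_range_succ, ih,
      sum_tentG J p hp (fun x => 2 ^ J * (x * (1 / (4 * 4 ^ J)))) (by simp)]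
    simp only [qf]
    rcases fract_succ J p with ⟨h, e⟩ | ⟨h, e⟩
    · rw [min_eq_left (by linarith), e, div_pow, div_pow, one_pow, one_pow, pow_succ 4]
      field_simp
      ring
    · rw [min_eq_right (by linarith), e, div_pow, div_pow, one_pow, one_pow, pow_succ 4]
      field_simp
      ring

lemma sum_kk (p : ℝ) (hp : p ∈ Set.Ico (0 : ℝ) 1) (J : ℕ) :
    ∑ j ∈ Finset.range J, ∑ m ∈ Finset.range (2 ^ j),
    (2 : ℝ) ^ j * (tentG j m p) ^ 2 = p * (1 - p) - (1 / 2) ^ J * qf J p := by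
  induction J with
  | zero => simp [qf_zero p hp]
  | succ J ih =>
    rw [Finset.sum_range_succ, ih,
      sum_tentG J p hp (fun x => 2 ^ J * x ^ 2) (by simp)]
    simp only [qf]
    rcases fract_succ J p with ⟨h, e⟩ | ⟨h, e⟩
    · rw [min_eq_left (by linarith), e, div_pow 1, div_pow 1, one_pow, one_pow, pow_succ 2]
      field_simp
      ring
    · rw [min_eq_right (by linarith), e, div_pow 1, div_pow 1, one_pow, one_pow, pow_succ 2]
      field_simp
      ring

/-! ### d-dimensional part -/

lemma unitBox_meas (d : ℕ) : MeasurableSet (unitBox d) :=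
  MeasurableSet.univ_pi fun _ => measurableSet_Ico

lemma unitBox_vol (d : ℕ) : volume (unitBox d) = 1 := by
  unfold unitBox
  rw [Real.volume_pi_Ico]
  simp

instance unitBox_fin (d : ℕ) : IsFiniteMeasure (volume.restrict (unitBox d)) :=
  ⟨by rw [Measure.restrict_apply_univ, unitBox_vol]; exact ENNReal.one_lt_top⟩

lemma prodInt {d : ℕ} (F : Fin d → ℝ → ℝ) :
    ∫ x in unitBox d, ∏ k, F k (x k) = ∏ k, ∫ x in Set.Ico (0 : ℝ) 1, F k x := by
  unfold unitBox
  rw [volume_pi, Measure.restrict_pi_pi, integral_fintype_prod_eq_prod]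

lemma haarD_meas {d : ℕ} (j m : Fin d → ℕ) : Measurable (haarD j m) := by
  unfold haarD
  exact Finset.measurable_prod _ fun i _ => (haar1_meas _ _).comp (measurable_pi_apply i)

lemma haarD_abs {d : ℕ} (j m : Fin d → ℕ) (x : Fin d → ℝ) : |haarD j m x| ≤ 1 := by
  unfold haarD
  rw [Finset.abs_prod]
  exact Finset.prod_le_one (fun _ _ => abs_nonneg _) fun _ _ => haar1_abs _ _ _

lemma haarD_supp {d : ℕ} (j m : Fin d → ℕ) (x : Fin d → ℝ) (h : x ∉ dyadicBox j m) :
    haarD j m x = 0 := by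
  unfold dyadicBox at h
  simp only [Set.mem_pi, Set.mem_univ, true_imp_iff, not_forall] at h
  obtain ⟨i, hi⟩ := h
  exact Finset.prod_eq_zero (Finset.mem_univ i) (haar1_supp _ _ _ hi)

lemma dyadicBox_sub {d : ℕ} (j m : Fin d → ℕ) (hm : ∀ i, m i < 2 ^ j i) :
    dyadicBox j m ⊆ unitBox d := by
  intro x hx i _
  obtain ⟨h0, h1, h2, h3⟩ := haar_pts _ _ (hm i)
  have := hx i (Set.mem_univ i)
  exact ⟨h0.trans this.1, this.2.trans_le h3⟩

lemma haarD_orth {d : ℕ} (j m j' m' : Fin d → ℕ) (hm : ∀ i, m i < 2 ^ j i)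
    (hm' : ∀ i, m' i < 2 ^ j' i) :
    ∫ x in unitBox d, haarD j m x * haarD j' m' x =
      if (j, m) = (j', m') then ((2 : ℝ) ^ (∑ i, j i))⁻¹ else 0 := by
  unfold haarD
  simp_rw [← Finset.prod_mul_distrib]
  rw [prodInt (fun i x => haar1 (j i) (m i) x * haar1 (j' i) (m' i) x)]
  split_ifs with h
  · obtain ⟨rfl, rfl⟩ := Prod.mk.injEq _ _ _ _ ▸ h
    rw [← Finset.prod_pow_eq_pow_sum, ← Finset.prod_inv_distrib]
    exact Finset.prod_congr rfl fun i _ => int_haar_sq _ _ (hm i)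
  · have : ∃ i, ¬ (j i = j' i ∧ m i = m' i) := by
      by_contra hc
      push Not at hc
      exact h (Prod.ext (funext fun i => (hc i).1) (funext fun i => (hc i).2))
    obtain ⟨i, hi⟩ := this
    exact Finset.prod_eq_zero (Finset.mem_univ i) (int_haar_orth _ _ _ _ (hm i) (hm' i) hi)

/-- Bessel's inequality. -/
lemma bessel {d : ℕ} (f : (Fin d → ℝ) → ℝ) (hf : Measurable f) (M : ℝ)
    (hM : ∀ x ∈ unitBox d, |f x| ≤ M) (U : Set (Fin d → ℝ)) (hU : MeasurableSet U)
    (hUB : U ⊆ unitBox d) (S : Finset ((Fin d → ℕ) × (Fin d → ℕ)))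
    (hS : ∀ I ∈ S, (∀ i, I.2 i < 2 ^ I.1 i) ∧ dyadicBox I.1 I.2 ⊆ U) :
    ∑ I ∈ S, (2 : ℝ) ^ (∑ i, I.1 i) * (haarCoef f I.1 I.2) ^ 2 ≤ M ^ 2 * (volume U).toReal := by
  set c : (Fin d → ℕ) × (Fin d → ℕ) → ℝ := fun I => (2 : ℝ) ^ (∑ i, I.1 i) * haarCoef f I.1 I.2
    with hc
  have hfh : ∀ I : (Fin d → ℕ) × (Fin d → ℕ),
      IntegrableOn (fun x => f x * haarD I.1 I.2 x) (unitBox d) := by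
    intro I
    refine Integrable.of_bound (C := M) ((hf.mul (haarD_meas _ _)).aestronglyMeasurable) ?_
    refine (ae_restrict_iff' (unitBox_meas d)).mpr (Filter.Eventually.of_forall fun x hx => ?_)
    rw [Real.norm_eq_abs, abs_mul]
    have h1 := hM x hx
    have h2 := haarD_abs I.1 I.2 x
    nlinarith [abs_nonneg (f x), abs_nonneg (haarD I.1 I.2 x)]
  have hhh : ∀ I I' : (Fin d → ℕ) × (Fin d → ℕ),
      IntegrableOn (fun x => haarD I.1 I.2 x * haarD I'.1 I'.2 x) (unitBox d) := by
    intro I I'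
    refine Integrable.of_bound (C := 1)
      (((haarD_meas _ _).mul (haarD_meas _ _)).aestronglyMeasurable)
      (Filter.Eventually.of_forall fun x => ?_)
    rw [Real.norm_eq_abs, abs_mul]
    exact mul_le_one₀ (haarD_abs _ _ _) (abs_nonneg _) (haarD_abs _ _ _)
  have i1 : IntegrableOn (fun x => ∑ I ∈ S, 2 * c I * (f x * haarD I.1 I.2 x)) (unitBox d) :=
    integrable_finsetSum _ fun I _ => (hfh I).const_mul _
  have i2 : IntegrableOn (fun x => ∑ I ∈ S, ∑ I' ∈ S,
      c I * c I' * (haarD I.1 I.2 x * haarD I'.1 I'.2 x)) (unitBox d) :=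
    integrable_finsetSum _ fun I _ => integrable_finsetSum _ fun I' _ => (hhh I I').const_mul _
  have e1 : ∫ x in unitBox d, ∑ I ∈ S, 2 * c I * (f x * haarD I.1 I.2 x) =
      2 * ∑ I ∈ S, (2 : ℝ) ^ (∑ i, I.1 i) * (haarCoef f I.1 I.2) ^ 2 := by
    rw [integral_finsetSum _ fun I _ => (hfh I).const_mul _, Finset.mul_sum]
    refine Finset.sum_congr rfl fun I _ => ?_
    rw [integral_const_mul]
    change 2 * c I * haarCoef f I.1 I.2 = _
    simp only [hc]; ring
  have e2 : ∫ x in unitBox d, ∑ I ∈ S, ∑ I' ∈ S,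
      c I * c I' * (haarD I.1 I.2 x * haarD I'.1 I'.2 x) =
      ∑ I ∈ S, (2 : ℝ) ^ (∑ i, I.1 i) * (haarCoef f I.1 I.2) ^ 2 := by
    rw [integral_finsetSum _ fun I _ => integrable_finsetSum _ fun I' _ =>
      (hhh I I').const_mul _]
    refine Finset.sum_congr rfl fun I hI => ?_
    rw [integral_finsetSum _ fun I' _ => (hhh I I').const_mul _]
    rw [Finset.sum_eq_single I]
    · rw [integral_const_mul, haarD_orth _ _ _ _ (hS I hI).1 (hS I hI).1, if_pos rfl]
      simp only [hc]
      field_simp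
    · intro I' hI' hne
      rw [integral_const_mul, haarD_orth _ _ _ _ (hS I hI).1 (hS I' hI').1, if_neg, mul_zero]
      exact fun h => hne h.symm
    · exact fun h => absurd hI h
  have key : ∫ x in unitBox d, (∑ I ∈ S, 2 * c I * (f x * haarD I.1 I.2 x) -
      ∑ I ∈ S, ∑ I' ∈ S, c I * c I' * (haarD I.1 I.2 x * haarD I'.1 I'.2 x)) ≤
      ∫ x in unitBox d, U.indicator (fun _ => M ^ 2) x := by
    refine setIntegral_mono_on (i1.sub i2)
      ((integrable_const _).indicator hU) (unitBox_meas d) ?_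
    intro x hx
    set g := ∑ I ∈ S, c I * haarD I.1 I.2 x with hg
    have g1 : ∑ I ∈ S, 2 * c I * (f x * haarD I.1 I.2 x) = 2 * f x * g := by
      rw [hg, Finset.mul_sum]; exact Finset.sum_congr rfl fun I _ => by ring
    have g2 : ∑ I ∈ S, ∑ I' ∈ S, c I * c I' * (haarD I.1 I.2 x * haarD I'.1 I'.2 x) = g * g := by
      rw [hg, Finset.sum_mul_sum]
      exact Finset.sum_congr rfl fun I _ => Finset.sum_congr rfl fun I' _ => by ring
    rw [g1, g2]
    by_cases hxU : x ∈ U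
    · rw [Set.indicator_of_mem hxU]
      have := sq_le_sq' (by linarith [neg_abs_le (f x), hM x hx]) ((le_abs_self _).trans (hM x hx))
      nlinarith [sq_nonneg (f x - g)]
    · rw [Set.indicator_of_notMem hxU]
      have : g = 0 := Finset.sum_eq_zero fun I hI => by
        rw [haarD_supp _ _ _ fun h => hxU ((hS I hI).2 h), mul_zero]
      rw [this]; simp
  rw [integral_sub i1 i2, e1, e2, setIntegral_indicator hU, Set.inter_eq_right.mpr hUB,
    setIntegral_const, measureReal_def, smul_eq_mul] at key
  linarith

lemma bessel_fin {d : ℕ} (f : (Fin d → ℝ) → ℝ) (hf : Measurable f) (M : ℝ)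
    (hM : ∀ x ∈ unitBox d, |f x| ≤ M) (U : Set (Fin d → ℝ)) (hU : MeasurableSet U)
    (hUB : U ⊆ unitBox d) (T : Finset (Fin d → ℕ)) :
    ∑ j ∈ T, (2 : ℝ) ^ (∑ i, j i) *
        ∑ m ∈ Fintype.piFinset (fun i => Finset.range (2 ^ j i)),
          (if dyadicBox j m ⊆ U then (haarCoef f j m) ^ 2 else 0)
      ≤ M ^ 2 * (volume U).toReal := by
  have := bessel f hf M hM U hU hUB
    (((T.sigma fun j => Fintype.piFinset (fun i => Finset.range (2 ^ j i))).filter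
      fun I => dyadicBox I.1 I.2 ⊆ U).map (Equiv.sigmaEquivProd _ _).toEmbedding) (by
      intro I hI
      simp only [Finset.mem_map, Finset.mem_filter, Finset.mem_sigma, Fintype.mem_piFinset,
        Finset.mem_range] at hI
      obtain ⟨I', ⟨⟨_, h1⟩, h2⟩, rfl⟩ := hI
      exact ⟨h1, h2⟩)
  refine le_trans (le_of_eq ?_) this
  rw [Finset.sum_map, Finset.sum_filter, Finset.sum_sigma]
  refine Finset.sum_congr rfl fun j _ => ?_
  rw [Finset.mul_sum]
  refine Finset.sum_congr rfl fun m _ => ?_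
  simp [mul_ite]

lemma bmo_summable {d : ℕ} (f : (Fin d → ℝ) → ℝ) (hf : Measurable f) (M : ℝ)
    (hM : ∀ x ∈ unitBox d, |f x| ≤ M) (U : Set (Fin d → ℝ)) (hU : MeasurableSet U)
    (hUB : U ⊆ unitBox d) :
    Summable (fun j : Fin d → ℕ => (2 : ℝ) ^ (∑ i, j i) *
        ∑ m ∈ Fintype.piFinset (fun i => Finset.range (2 ^ j i)),
          (if dyadicBox j m ⊆ U then (haarCoef f j m) ^ 2 else 0)) :=
  summable_of_sum_le (fun j => mul_nonneg (by positivity) (Finset.sum_nonneg fun m _ => by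
    split_ifs <;> positivity)) (bessel_fin f hf M hM U hU hUB)

lemma bmo_term_le {d : ℕ} (f : (Fin d → ℝ) → ℝ) (hf : Measurable f) (M : ℝ)
    (hM : ∀ x ∈ unitBox d, |f x| ≤ M)
    (U : {U : Set (Fin d → ℝ) // MeasurableSet U ∧ U ⊆ unitBox d ∧ 0 < volume U}) :
    (volume U.1).toReal⁻¹ *
      ∑' j : Fin d → ℕ, (2 : ℝ) ^ (∑ i, j i) *
        ∑ m ∈ Fintype.piFinset (fun i => Finset.range (2 ^ j i)),
          (if dyadicBox j m ⊆ U.1 then (haarCoef f j m) ^ 2 else 0) ≤ M ^ 2 := by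
  obtain ⟨U, hU, hUB, hpos⟩ := U
  have hfin : volume U ≠ ⊤ := ne_top_of_le_ne_top (by rw [unitBox_vol]; exact ENNReal.one_ne_top)
    (measure_mono hUB)
  have hp : 0 < (volume U).toReal := ENNReal.toReal_pos hpos.ne' hfin
  rw [inv_mul_le_iff₀ hp, mul_comm]
  exact (bmo_summable f hf M hM U hU hUB).tsum_le_of_sum_le (bessel_fin f hf M hM U hU hUB)

lemma bmoSq_le {d : ℕ} (f : (Fin d → ℝ) → ℝ) (hf : Measurable f) (M : ℝ)
    (hM : ∀ x ∈ unitBox d, |f x| ≤ M) : bmoSq f ≤ M ^ 2 :=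
  Real.iSup_le (bmo_term_le f hf M hM) (sq_nonneg _)

lemma le_bmoSq {d : ℕ} (f : (Fin d → ℝ) → ℝ) (hf : Measurable f) (M : ℝ)
    (hM : ∀ x ∈ unitBox d, |f x| ≤ M) (T : Finset (Fin d → ℕ)) :
    ∑ j ∈ T, ∑ m ∈ Fintype.piFinset (fun i => Finset.range (2 ^ j i)),
      (2 : ℝ) ^ (∑ i, j i) * (haarCoef f j m) ^ 2 ≤ bmoSq f := by
  have hbdd := le_ciSup (f := fun U : {U : Set (Fin d → ℝ) //
      MeasurableSet U ∧ U ⊆ unitBox d ∧ 0 < volume U} =>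
    (volume U.1).toReal⁻¹ *
      ∑' j : Fin d → ℕ, (2 : ℝ) ^ (∑ i, j i) *
        ∑ m ∈ Fintype.piFinset (fun i => Finset.range (2 ^ j i)),
          (if dyadicBox j m ⊆ U.1 then (haarCoef f j m) ^ 2 else 0))
    ⟨M ^ 2, by rintro _ ⟨U, rfl⟩; exact bmo_term_le f hf M hM U⟩
    ⟨unitBox d, unitBox_meas d, le_rfl, by rw [unitBox_vol]; exact zero_lt_one⟩
  refine le_trans ?_ hbdd
  simp only [unitBox_vol, ENNReal.toReal_one, inv_one, one_mul]
  refine le_trans (le_of_eq ?_) ((bmo_summable f hf M hM _ (unitBox_meas d) le_rfl).sum_le_tsum T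
    (fun j _ => mul_nonneg (by positivity) (Finset.sum_nonneg fun m _ => by
      split_ifs <;> positivity)))
  refine Finset.sum_congr rfl fun j _ => ?_
  rw [Finset.mul_sum]
  refine Finset.sum_congr rfl fun m hm => ?_
  rw [if_pos (dyadicBox_sub _ _ fun i => by
    simpa using Fintype.mem_piFinset.mp hm i)]

/-! ### the discrepancy function -/

lemma discAnch_eq {d N : ℕ} (P : Fin N → Fin d → ℝ) (hP : ∀ i, P i ∈ unitBox d)
    (t : Fin d → ℝ) : discAnch P t =
    (∑ i, ∏ k, (if P i k < t k then (1 : ℝ) else 0)) / N - ∏ k, t k := by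
  unfold discAnch
  congr 2
  rw [Finset.card_filter]
  push_cast
  refine Finset.sum_congr rfl fun i _ => ?_
  have h0 : ∀ k, 0 ≤ P i k := fun k => (hP i k (Set.mem_univ k)).1
  rw [Finset.prod_ite_zero]
  simp [h0]

lemma discAnch_meas {d N : ℕ} (P : Fin N → Fin d → ℝ) (hP : ∀ i, P i ∈ unitBox d) :
    Measurable (discAnch P) := by
  have : discAnch P = fun t => _ := funext (discAnch_eq P hP)
  rw [this]
  refine Measurable.sub (Measurable.div_const (Finset.measurable_sum _ fun i _ =>
    Finset.measurable_prod _ fun k _ => ?_) _)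
    (Finset.measurable_prod _ fun k _ => measurable_pi_apply k)
  exact Measurable.ite (measurableSet_lt measurable_const (measurable_pi_apply k))
    measurable_const measurable_const

lemma discAnch_abs {d N : ℕ} (P : Fin N → Fin d → ℝ) (t : Fin d → ℝ) (ht : t ∈ unitBox d) :
    |discAnch P t| ≤ 1 := by
  unfold discAnch
  have h1 : 0 ≤ ∏ k, t k := Finset.prod_nonneg fun k _ => (ht k (Set.mem_univ k)).1
  have h2 : ∏ k, t k ≤ 1 := Finset.prod_le_one (fun k _ => (ht k (Set.mem_univ k)).1)
    fun k _ => (ht k (Set.mem_univ k)).2.le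
  have h3 : ((Finset.univ.filter fun i => ∀ k, 0 ≤ P i k ∧ P i k < t k).card : ℝ) / N ≤ 1 := by
    apply div_le_one_of_le₀ _ (Nat.cast_nonneg _)
    exact_mod_cast (Finset.card_le_univ _).trans (by simp)
  have h4 : 0 ≤ ((Finset.univ.filter fun i => ∀ k, 0 ≤ P i k ∧ P i k < t k).card : ℝ) / N := by
    positivity
  rw [abs_le]; constructor <;> linarith

lemma coef_eq {d N : ℕ} (P : Fin N → Fin d → ℝ) (hP : ∀ i, P i ∈ unitBox d)
    (j m : Fin d → ℕ) (hm : ∀ i, m i < 2 ^ j i) :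
    haarCoef (discAnch P) j m =
      (-1) ^ d * ((∑ i, ∏ k, tentG (j k) (m k) (P i k)) / N - ∏ k, (1 / (4 * 4 ^ j k))) := by
  unfold haarCoef
  have e : ∀ x, discAnch P x * haarD j m x =
      (∑ i, (1 / (N : ℝ)) * ∏ k, ((if P i k < x k then (1 : ℝ) else 0) * haar1 (j k) (m k) (x k)))
      - ∏ k, (x k * haar1 (j k) (m k) (x k)) := by
    intro x
    rw [discAnch_eq P hP, haarD, sub_mul]
    simp_rw [Finset.prod_mul_distrib]
    rw [Finset.sum_div, Finset.sum_mul]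
    congr 1
    exact Finset.sum_congr rfl fun i _ => by ring
  simp_rw [e]
  have hmeas : ∀ i, Measurable fun x : Fin d → ℝ =>
      ∏ k, ((if P i k < x k then (1 : ℝ) else 0) * haar1 (j k) (m k) (x k)) := by
    intro i
    refine Finset.measurable_prod _ fun k _ => Measurable.mul ?_
      ((haar1_meas _ _).comp (measurable_pi_apply k))
    exact Measurable.ite (measurableSet_lt measurable_const (measurable_pi_apply k))
      measurable_const measurable_const
  have i1 : ∀ i, IntegrableOn (fun x : Fin d → ℝ => (1 / (N : ℝ)) *
      ∏ k, ((if P i k < x k then (1 : ℝ) else 0) * haar1 (j k) (m k) (x k))) (unitBox d) := by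
    intro i
    refine Integrable.const_mul (Integrable.of_bound (C := 1) (hmeas i).aestronglyMeasurable
      (Filter.Eventually.of_forall fun x => ?_)) _
    rw [Real.norm_eq_abs, Finset.abs_prod]
    refine Finset.prod_le_one (fun _ _ => abs_nonneg _) fun k _ => ?_
    rw [abs_mul]
    refine mul_le_one₀ ?_ (abs_nonneg _) (haar1_abs _ _ _)
    split_ifs <;> simp
  have i2 : IntegrableOn (fun x : Fin d → ℝ => ∏ k, (x k * haar1 (j k) (m k) (x k)))
      (unitBox d) := by
    refine Integrable.of_bound (C := 1) (Finset.measurable_prod _ fun k _ =>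
      (measurable_pi_apply k).mul ((haar1_meas _ _).comp
        (measurable_pi_apply k))).aestronglyMeasurable
      ((ae_restrict_iff' (unitBox_meas d)).mpr (Filter.Eventually.of_forall fun x hx => ?_))
    rw [Real.norm_eq_abs, Finset.abs_prod]
    refine Finset.prod_le_one (fun _ _ => abs_nonneg _) fun k _ => ?_
    rw [abs_mul]
    refine mul_le_one₀ ?_ (abs_nonneg _) (haar1_abs _ _ _)
    have := hx k (Set.mem_univ k)
    rw [abs_of_nonneg this.1]; exact this.2.le
  rw [integral_sub (integrable_finsetSum _ fun i _ => i1 i) i2,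
    integral_finsetSum _ fun i _ => i1 i, prodInt (fun k x => x * haar1 (j k) (m k) x)]
  simp_rw [integral_const_mul]
  have e3 : ∀ i, ∫ x in unitBox d,
      ∏ k, ((if P i k < x k then (1 : ℝ) else 0) * haar1 (j k) (m k) (x k)) =
      (-1) ^ d * ∏ k, tentG (j k) (m k) (P i k) := by
    intro i
    rw [prodInt (fun k x => (if P i k < x then (1 : ℝ) else 0) * haar1 (j k) (m k) x)]
    rw [Finset.prod_congr rfl fun k _ => int_haar_ind _ _ (hm k) _, Finset.prod_neg]
    simp
  rw [Finset.prod_congr rfl fun k _ => int_haar_id _ _ (hm k), Finset.prod_neg]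
  simp_rw [e3]
  rw [mul_sub, Finset.sum_div, Finset.mul_sum, Finset.card_univ, Fintype.card_fin]
  congr 1
  exact Finset.sum_congr rfl fun i _ => by ring

lemma sum_prod_swap {d : ℕ} (J : ℕ) (F : Fin d → ℕ → ℕ → ℝ) :
    ∑ j ∈ Fintype.piFinset (fun _ : Fin d => Finset.range J),
      ∑ m ∈ Fintype.piFinset (fun i => Finset.range (2 ^ j i)), ∏ k, F k (j k) (m k) =
    ∏ k, ∑ j ∈ Finset.range J, ∑ m ∈ Finset.range (2 ^ j), F k j m := by
  rw [Finset.prod_univ_sum]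
  refine Finset.sum_congr rfl fun j _ => ?_
  rw [Finset.prod_univ_sum]

lemma term_lower {d N : ℕ} (P : Fin N → Fin d → ℝ) (hP : ∀ i, P i ∈ unitBox d)
    (j m : Fin d → ℕ) (hm : ∀ i, m i < 2 ^ j i) :
    ∏ k, ((2 : ℝ) ^ j k * (1 / (4 * 4 ^ j k)) ^ 2)
      - ∑ i, (2 / (N : ℝ)) * ∏ k, ((2 : ℝ) ^ j k * (tentG (j k) (m k) (P i k) *
          (1 / (4 * 4 ^ j k))))
      + ∑ i, (1 / (N : ℝ) ^ 2) * ∏ k, ((2 : ℝ) ^ j k * (tentG (j k) (m k) (P i k)) ^ 2)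
    ≤ (2 : ℝ) ^ (∑ i, j i) * (haarCoef (discAnch P) j m) ^ 2 := by
  rw [coef_eq P hP j m hm, mul_pow, ← pow_mul, mul_comm d 2, pow_mul, neg_one_sq, one_pow, one_mul]
  simp_rw [Finset.prod_mul_distrib, Finset.prod_pow, ← Finset.mul_sum]
  rw [Finset.prod_pow_eq_pow_sum, ← Finset.sum_mul]
  set A := ∏ k, (1 / (4 * (4 : ℝ) ^ j k))
  set W := (2 : ℝ) ^ (∑ i, j i)
  have hW : 0 ≤ W := by positivity
  have hs : ∑ i, (∏ k, tentG (j k) (m k) (P i k)) ^ 2 ≤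
      (∑ i, ∏ k, tentG (j k) (m k) (P i k)) ^ 2 :=
    Finset.sum_sq_le_sq_sum_of_nonneg fun i _ => Finset.prod_nonneg fun k _ => tentG_nonneg _ _ _
  set X := ∑ i, ∏ k, tentG (j k) (m k) (P i k)
  set Y := ∑ i, (∏ k, tentG (j k) (m k) (P i k)) ^ 2
  have : 0 ≤ W * (1 / (N : ℝ) ^ 2) * (X ^ 2 - Y) :=
    mul_nonneg (mul_nonneg hW (by positivity)) (by linarith)
  have e : W * (X / N - A) ^ 2 = W * A ^ 2 - 2 / N * (W * (X * A)) + 1 / (N : ℝ) ^ 2 * (W * X ^ 2) := by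
    ring
  rw [e]
  linarith

lemma lower_J {d N : ℕ} (P : Fin N → Fin d → ℝ) (hP : ∀ i, P i ∈ unitBox d) (J : ℕ) :
    ∏ _k : Fin d, ((1 - (1 / 4 : ℝ) ^ J) / 12)
      - ∑ i, (2 / (N : ℝ)) * ∏ k, ((P i k * (1 - P i k) - (1 / 4) ^ J * qf J (P i k)) / 2)
      + ∑ i, (1 / (N : ℝ) ^ 2) * ∏ k, (P i k * (1 - P i k) - (1 / 2) ^ J * qf J (P i k))
    ≤ bmoSq (discAnch P) := by
  refine le_trans ?_ (le_bmoSq (discAnch P) (discAnch_meas P hP) 1 (discAnch_abs P)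
    (Fintype.piFinset (fun _ : Fin d => Finset.range J)))
  refine le_trans (le_of_eq ?_) (Finset.sum_le_sum fun j _ => Finset.sum_le_sum fun m hm =>
    term_lower P hP j m fun i => by simpa using Fintype.mem_piFinset.mp hm i)
  simp_rw [Finset.sum_add_distrib, Finset.sum_sub_distrib]
  congr 1
  · congr 1
    · rw [sum_prod_swap J fun _ j _ => (2 : ℝ) ^ j * (1 / (4 * 4 ^ j)) ^ 2]
      simp_rw [sum_aa]
    · simp_rw [Finset.sum_comm (s := Fintype.piFinset (fun i => Finset.range (2 ^ _))) (t := Finset.univ)]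
      rw [Finset.sum_comm]
      refine Finset.sum_congr rfl fun i _ => ?_
      simp_rw [← Finset.mul_sum]
      rw [sum_prod_swap J fun k j m => (2 : ℝ) ^ j * (tentG j m (P i k) * (1 / (4 * 4 ^ j)))]
      congr 1
      exact Finset.prod_congr rfl fun k _ => (sum_ca _ (hP i k (Set.mem_univ k)) J).symm
  · simp_rw [Finset.sum_comm (s := Fintype.piFinset (fun i => Finset.range (2 ^ _))) (t := Finset.univ)]
    rw [Finset.sum_comm]
    refine Finset.sum_congr rfl fun i _ => ?_
    simp_rw [← Finset.mul_sum]
    rw [sum_prod_swap J fun k j m => (2 : ℝ) ^ j * (tentG j m (P i k)) ^ 2]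
    congr 1
    exact Finset.prod_congr rfl fun k _ => (sum_kk _ (hP i k (Set.mem_univ k)) J).symm

open Filter Topology in
lemma tendsto_qf (c p : ℝ) (h0 : 0 ≤ c) (h1 : c < 1) :
    Tendsto (fun J => c ^ J * qf J p) atTop (𝓝 0) := by
  refine squeeze_zero (fun J => mul_nonneg (pow_nonneg h0 _) (qf_bd J p).1)
    (fun J => mul_le_of_le_one_right (pow_nonneg h0 _) (qf_bd J p).2)
    (tendsto_pow_atTop_nhds_zero_of_lt_one h0 h1)

open Filter Topology in
lemma lower_lim {d N : ℕ} (P : Fin N → Fin d → ℝ) (hP : ∀ i, P i ∈ unitBox d) :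
    ∏ _k : Fin d, ((1 - (0 : ℝ)) / 12)
      - ∑ i, (2 / (N : ℝ)) * ∏ k, ((P i k * (1 - P i k) - 0) / 2)
      + ∑ i, (1 / (N : ℝ) ^ 2) * ∏ k, (P i k * (1 - P i k) - 0)
    ≤ bmoSq (discAnch P) := by
  refine le_of_tendsto' (x := atTop) ?_ (lower_J P hP)
  refine Tendsto.add (Tendsto.sub ?_ ?_) ?_
  · refine tendsto_finset_prod _ fun k _ => Tendsto.div_const (Tendsto.const_sub _ ?_) _
    exact tendsto_pow_atTop_nhds_zero_of_lt_one (by norm_num) (by norm_num)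
  · refine tendsto_finset_sum _ fun i _ => Tendsto.const_mul _ (tendsto_finset_prod _ fun k _ =>
      Tendsto.div_const (Tendsto.const_sub _ ?_) _)
    exact tendsto_qf _ _ (by norm_num) (by norm_num)
  · refine tendsto_finset_sum _ fun i _ => Tendsto.const_mul _ (tendsto_finset_prod _ fun k _ =>
      Tendsto.const_sub _ ?_)
    exact tendsto_qf _ _ (by norm_num) (by norm_num)

lemma lower_final {d N : ℕ} (P : Fin N → Fin d → ℝ) (hP : ∀ i, P i ∈ unitBox d) :
    (1 / 12 : ℝ) ^ d * (1 - N * (3 / 4) ^ d) ≤ bmoSq (discAnch P) := by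
  refine le_trans ?_ (lower_lim P hP)
  simp only [sub_zero, Finset.prod_const, Finset.card_univ, Fintype.card_fin]
  set y : ℝ := (1 / 2) ^ d with hy
  have hy0 : 0 ≤ y := by positivity
  have e : (1 / 12 : ℝ) ^ d * (3 / 4) ^ d = y ^ 4 := by
    rw [hy, ← mul_pow, ← pow_mul, mul_comm d 4, pow_mul]; norm_num
  have hterm : ∀ i, (2 / (N : ℝ)) * ∏ k, (P i k * (1 - P i k) / 2)
      - (1 / (N : ℝ) ^ 2) * ∏ k, (P i k * (1 - P i k)) ≤ y ^ 4 := by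
    intro i
    have hq : ∀ k, 0 ≤ P i k * (1 - P i k) ∧ P i k * (1 - P i k) ≤ 1 / 4 := by
      intro k
      have := hP i k (Set.mem_univ k)
      exact ⟨mul_nonneg this.1 (by linarith [this.2]), by nlinarith [sq_nonneg (P i k - 1 / 2)]⟩
    have h1 : ∏ k, (P i k * (1 - P i k) / 2) = (∏ k, (P i k * (1 - P i k))) * y := by
      rw [Finset.prod_div_distrib, Finset.prod_const, Finset.card_univ, Fintype.card_fin, hy,
        one_div, inv_pow, div_eq_mul_inv]
    have h2 : ∏ k, (P i k * (1 - P i k)) ≤ y ^ 2 := by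
      calc ∏ k, (P i k * (1 - P i k)) ≤ ∏ _k : Fin d, (1 / 4 : ℝ) :=
            Finset.prod_le_prod (fun k _ => (hq k).1) fun k _ => (hq k).2
        _ = y ^ 2 := by
            rw [Finset.prod_const, Finset.card_univ, Fintype.card_fin, hy, ← pow_mul, mul_comm d 2,
              pow_mul]; norm_num
    have h3 : 0 ≤ ∏ k, (P i k * (1 - P i k)) := Finset.prod_nonneg fun k _ => (hq k).1
    rw [h1]
    set s := ∏ k, (P i k * (1 - P i k))
    have h4 : 0 ≤ s * (y - 1 / N) ^ 2 := mul_nonneg h3 (sq_nonneg _)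
    have h5 : s * y ^ 2 ≤ y ^ 2 * y ^ 2 := mul_le_mul_of_nonneg_right h2 (sq_nonneg _)
    have h6 : s * (y - 1 / N) ^ 2 = s * y ^ 2 - (2 / N * (s * y) - 1 / (N : ℝ) ^ 2 * s) := by ring
    nlinarith
  have hsum := Finset.sum_le_sum fun i (_ : i ∈ Finset.univ) => hterm i
  rw [Finset.sum_sub_distrib, Finset.sum_const, Finset.card_univ, Fintype.card_fin,
    nsmul_eq_mul] at hsum
  have e2 : (1 / 12 : ℝ) ^ d * (1 - N * (3 / 4) ^ d) = (1 / 12 : ℝ) ^ d - N * y ^ 4 := by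
    rw [← e]; ring
  rw [e2]
  linarith

/-! ### the regular grid -/

lemma prod_diff {ι : Type*} (s : Finset ι) (a b : ι → ℝ) (δ : ℝ)
    (ha : ∀ i, 0 ≤ a i ∧ a i ≤ 1) (hb : ∀ i, 0 ≤ b i ∧ b i ≤ 1) (h : ∀ i, |a i - b i| ≤ δ) :
    |∏ i ∈ s, a i - ∏ i ∈ s, b i| ≤ s.card * δ := by
  induction s using Finset.induction_on with
  | empty => simp
  | insert i s hi ih =>
    rw [Finset.prod_insert hi, Finset.prod_insert hi, Finset.card_insert_of_notMem hi]
    push_cast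
    have h1 : 0 ≤ ∏ i ∈ s, b i := Finset.prod_nonneg fun i _ => (hb i).1
    have h2 : ∏ i ∈ s, b i ≤ 1 := Finset.prod_le_one (fun i _ => (hb i).1) fun i _ => (hb i).2
    have e : a i * ∏ i ∈ s, a i - b i * ∏ i ∈ s, b i =
        a i * (∏ i ∈ s, a i - ∏ i ∈ s, b i) + (a i - b i) * ∏ i ∈ s, b i := by ring
    rw [e]
    refine (abs_add_le _ _).trans ?_
    rw [abs_mul, abs_mul, abs_of_nonneg (ha i).1, abs_of_nonneg h1]
    have h3 := mul_le_of_le_one_left (abs_nonneg (∏ i ∈ s, a i - ∏ i ∈ s, b i)) (ha i).2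
    have h4 := mul_le_of_le_one_right (abs_nonneg (a i - b i)) h2
    linarith [h i]

lemma grid_count (n : ℕ) (hn : 0 < n) (t : ℝ) (ht : t ∈ Set.Ico (0 : ℝ) 1) :
    ∑ a : Fin n, (if ((a : ℕ) : ℝ) / n < t then (1 : ℝ) else 0) = ⌈n * t⌉₊ := by
  have hn' : (0 : ℝ) < n := by exact_mod_cast hn
  rw [Fin.sum_univ_eq_sum_range (fun a : ℕ => if (a : ℝ) / n < t then (1 : ℝ) else 0) n,
    ← Finset.sum_filter, Finset.sum_const, nsmul_eq_mul, mul_one]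
  have : (Finset.range n).filter (fun a : ℕ => (a : ℝ) / n < t) = Finset.range ⌈n * t⌉₊ := by
    ext a
    rw [Finset.mem_filter, Finset.mem_range, Finset.mem_range, Nat.lt_ceil, div_lt_iff₀ hn',
      mul_comm t]
    refine ⟨fun h => h.2, fun h => ⟨?_, h⟩⟩
    have : (a : ℝ) < n := by nlinarith [ht.2]
    exact_mod_cast this
  rw [this, Finset.card_range]

def gridP (d n : ℕ) : Fin (n ^ d) → Fin d → ℝ :=
  fun i k => ((finFunctionFinEquiv.symm i k : Fin n) : ℕ) / (n : ℝ)

lemma gridP_mem (d n : ℕ) (hn : 0 < n) (i : Fin (n ^ d)) : gridP d n i ∈ unitBox d := by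
  have hn' : (0 : ℝ) < n := by exact_mod_cast hn
  intro k _
  refine ⟨by unfold gridP; positivity, ?_⟩
  unfold gridP
  rw [div_lt_one hn']
  exact_mod_cast (finFunctionFinEquiv.symm i k).2

lemma grid_disc (d n : ℕ) (hn : 0 < n) (t : Fin d → ℝ) (ht : t ∈ unitBox d) :
    |discAnch (gridP d n) t| ≤ d / n := by
  have hn' : (0 : ℝ) < n := by exact_mod_cast hn
  rw [discAnch_eq _ (gridP_mem d n hn)]
  have e : ∑ i, ∏ k, (if gridP d n i k < t k then (1 : ℝ) else 0) = ∏ k, (⌈n * t k⌉₊ : ℝ) := by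
    rw [← Equiv.sum_comp finFunctionFinEquiv]
    simp only [gridP, Equiv.symm_apply_apply]
    rw [Finset.prod_congr rfl fun k _ => (grid_count n hn (t k) (ht k (Set.mem_univ k))).symm,
      Finset.prod_univ_sum, Fintype.piFinset_univ]
  have e2 : (∏ k, (⌈n * t k⌉₊ : ℝ)) / ((n ^ d : ℕ) : ℝ) = ∏ k, ((⌈n * t k⌉₊ : ℝ) / n) := by
    rw [Finset.prod_div_distrib]; simp
  rw [e, e2]
  have hc : ∀ k, n * t k ≤ ⌈n * t k⌉₊ ∧ (⌈n * t k⌉₊ : ℝ) < n * t k + 1 := fun k =>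
    ⟨Nat.le_ceil _, Nat.ceil_lt_add_one (mul_nonneg hn'.le (ht k (Set.mem_univ k)).1)⟩
  have hc2 : ∀ k, (⌈n * t k⌉₊ : ℝ) ≤ n := fun k => by
    have : ⌈n * t k⌉₊ ≤ n := Nat.ceil_le.mpr (by nlinarith [(ht k (Set.mem_univ k)).2])
    exact_mod_cast this
  have := prod_diff Finset.univ (fun k => (⌈n * t k⌉₊ : ℝ) / n) t (1 / n)
    (fun k => ⟨by positivity, by rw [div_le_one hn']; exact hc2 k⟩)
    (fun k => ⟨(ht k (Set.mem_univ k)).1, (ht k (Set.mem_univ k)).2.le⟩) (fun k => by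
      have : (⌈n * t k⌉₊ : ℝ) / n - t k = ((⌈n * t k⌉₊ : ℝ) - n * t k) / n := by field_simp
      rw [this, abs_of_nonneg (div_nonneg (by linarith [(hc k).1]) hn'.le)]
      gcongr
      linarith [(hc k).2])
  rw [Finset.card_univ, Fintype.card_fin] at this
  refine this.trans (le_of_eq (by ring))

lemma discBMO_grid (d n : ℕ) (hn : 0 < n) : discBMO d (n ^ d) ≤ d / n := by
  refine (ciInf_le ⟨0, by rintro _ ⟨P, rfl⟩; exact Real.sqrt_nonneg _⟩
    ⟨gridP d n, gridP_mem d n hn⟩).trans ?_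
  apply Real.sqrt_le_iff.mpr
  exact ⟨by positivity, bmoSq_le _ (discAnch_meas _ (gridP_mem d n hn)) _ (grid_disc d n hn)⟩

end

theorem bmo_discrepancy_curse (d : ℕ) (hd : 1 ≤ d) (ε : ℝ)
    (hε0 : 0 < ε) (hε1 : ε < 1) :
    ((4 : ℝ) / 3) ^ d * (1 - ε ^ 2) ≤ (NinvBMO d ε : ℝ) := by
  have hne : {N : ℕ | discBMO d N ≤ ε * Real.sqrt ((1 / 12) ^ d)}.Nonempty := by
    have hpos : 0 < ε * Real.sqrt ((1 / 12) ^ d) := mul_pos hε0 (Real.sqrt_pos.mpr (by positivity))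
    obtain ⟨n, hn⟩ := exists_nat_gt (d / (ε * Real.sqrt ((1 / 12) ^ d)))
    have hn0 : (0 : ℝ) < n := lt_of_le_of_lt (by positivity) hn
    refine ⟨n ^ d, (discBMO_grid d n (by exact_mod_cast hn0)).trans ?_⟩
    rw [div_lt_iff₀ hpos] at hn
    rw [div_le_iff₀ hn0]
    linarith
  have hmem : discBMO d (NinvBMO d ε) ≤ ε * Real.sqrt ((1 / 12) ^ d) := Nat.sInf_mem hne
  set N := NinvBMO d ε
  haveI : Nonempty {P : Fin N → Fin d → ℝ // ∀ i, P i ∈ unitBox d} :=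
    ⟨⟨fun _ _ => 0, fun i k _ => ⟨le_rfl, zero_lt_one⟩⟩⟩
  have hlow : Real.sqrt ((1 / 12 : ℝ) ^ d * (1 - N * (3 / 4) ^ d)) ≤ discBMO d N :=
    le_ciInf fun P => Real.sqrt_le_sqrt (lower_final P.1 P.2)
  have h := hlow.trans hmem
  have h12 : (0 : ℝ) < (1 / 12) ^ d := by positivity
  have h2 := (Real.sqrt_le_iff.mp h).2
  rw [mul_pow, Real.sq_sqrt h12.le, mul_comm (ε ^ 2)] at h2
  have h3 : 1 - N * (3 / 4 : ℝ) ^ d ≤ ε ^ 2 := le_of_mul_le_mul_left h2 h12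
  have h4 : ((4 : ℝ) / 3) ^ d * (3 / 4) ^ d = 1 := by rw [← mul_pow]; norm_num
  calc ((4 : ℝ) / 3) ^ d * (1 - ε ^ 2) ≤ (4 / 3) ^ d * (N * (3 / 4) ^ d) := by
        gcongr; linarith
    _ = N * ((4 / 3) ^ d * (3 / 4) ^ d) := by ring
    _ = N := by rw [h4, mul_one]
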